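/- Let k be a positive integer, let G be a finite simple graph, let I ⊆ V(G), let P be an I-connected path decomposition of G of width at most k−1, and let S be a bottleneck of G. Then there exists an I-connected path decomposition P' of G with width(P') ≤ width(P) such that P' is S-structured; moreover, in P' every connected component of G−S either is contained in the interval I(S,P') or waits in I(S,P'). -/

import Mathlib

/-!
A bottleneck has at least `2k + 1` branches, and at most `2k` of them meet the two bags in which the
last vertex of `S` to appear enters and the first vertex of `S` to disappear leaves. Any other
branch lies strictly between these two bags, so it is an in-branch.

Every component of `G - S` other than an in-branch is made to wait as follows. Let `W` be the union
of all in-branches; each bag meeting `W` contains `S`. Choose a bag `X c ⊇ S` for which `X c \ W` is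
smallest. Follow the decomposition outside `W` up to the bag `X c`, pause there while traversing the
whole decomposition inside `W`, then resume outside `W`. Nothing outside `W` moves during the pause,
and all in-branches are traversed in it. A bag meeting `W` during the pause consists of `X c \ W`
and `X t ∩ W` for some `X t ⊇ S`, so by the choice of `c` it is no larger than `X t`.

This keeps `I`-connectivity provided that no vertex of `W` appears before some bag contains all of
`S`: removing `W` from a prefix then never cuts a vertex of `S` off from `I`. The first bag that
contains `S` might introduce vertices of `W` along with the last vertices of `S`, so first its new
vertices are introduced one at a time, each one in `I` or adjacent to an earlier vertex. The
refined decomposition has a bag that completes `S` by adding just a single vertex; the vertices of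
`W` appear only after it.
-/

open SimpleGraph

variable {V : Type*}

/-- `N_G(Y)`: the set of vertices outside `Y` having a neighbor in `Y`. -/
def nbhdSet (G : SimpleGraph V) (Y : Set V) : Set V :=
  {v | v ∉ Y ∧ ∃ u ∈ Y, G.Adj u v}

/-- `C` is a connected component of the subgraph of `G` induced by `U`. -/
def IsCompIn (G : SimpleGraph V) (U C : Set V) : Prop :=
  C.Nonempty ∧ C ⊆ U ∧ (G.induce C).Connected ∧
    ∀ u ∈ C, ∀ v ∈ U, G.Adj u v → v ∈ C

/-- `C` is a connected component of `G - S`. -/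
def IsCompOf (G : SimpleGraph V) (S C : Set V) : Prop :=
  IsCompIn G Sᶜ C

/-- `C` is an `S`-branch: a connected component of `G - S` with `N_G(C) = S`. -/
def IsBranch (G : SimpleGraph V) (S C : Set V) : Prop :=
  IsCompOf G S C ∧ nbhdSet G C = S

/-- `S` is a bottleneck (for the width parameter `k`): a nonempty set with
at least `2k+1` `S`-branches. -/
def IsBottleneck (G : SimpleGraph V) (k : ℕ) (S : Set V) : Prop :=
  S.Nonempty ∧ 2 * k + 1 ≤ {C : Set V | IsBranch G S C}.ncard

/-- `(X 0, …, X (l-1))` is a path decomposition of `G`. -/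
def IsPathDecomp (G : SimpleGraph V) (l : ℕ) (X : ℕ → Set V) : Prop :=
  (∀ v, ∃ i < l, v ∈ X i) ∧
  (∀ u v, G.Adj u v → ∃ i < l, u ∈ X i ∧ v ∈ X i) ∧
  (∀ i j m, i ≤ j → j ≤ m → m < l → X i ∩ X m ⊆ X j)

/-- The width of a path decomposition: the maximum bag size minus one. -/
noncomputable def pdWidth (l : ℕ) (X : ℕ → Set V) : ℕ :=
  ((Finset.range l).sup fun i => (X i).ncard) - 1

/-- The set of indices of bags meeting the vertex set `C`. -/
def supp (l : ℕ) (X : ℕ → Set V) (C : Set V) : Set ℕ :=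
  {t | t < l ∧ (C ∩ X t).Nonempty}

/-- `a(C)`: the first index of a bag meeting `C`. -/
noncomputable def firstIdx (l : ℕ) (X : ℕ → Set V) (C : Set V) : ℕ :=
  sInf (supp l X C)

/-- `b(C)`: the last index of a bag meeting `C`. -/
noncomputable def lastIdx (l : ℕ) (X : ℕ → Set V) (C : Set V) : ℕ :=
  sSup (supp l X C)

/-- `C` is an in-branch of `S` with respect to the decomposition:
an `S`-branch with `S ⊆ X (a C)` and `S ⊆ X (b C)`. -/
def IsInBranch (G : SimpleGraph V) (l : ℕ) (X : ℕ → Set V) (S C : Set V) : Prop :=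
  IsBranch G S C ∧ S ⊆ X (firstIdx l X C) ∧ S ⊆ X (lastIdx l X C)

/-- `α(S)`: the minimum of `a(H)` over in-branches `H` of `S`. -/
noncomputable def botStart (G : SimpleGraph V) (l : ℕ) (X : ℕ → Set V) (S : Set V) : ℕ :=
  sInf {i | ∃ C, IsInBranch G l X S C ∧ i = firstIdx l X C}

/-- `β(S)`: the maximum of `b(H)` over in-branches `H` of `S`. -/
noncomputable def botEnd (G : SimpleGraph V) (l : ℕ) (X : ℕ → Set V) (S : Set V) : ℕ :=
  sSup {i | ∃ C, IsInBranch G l X S C ∧ i = lastIdx l X C}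

/-- The interval `I(S,P) = [α(S), β(S)]` of a bottleneck `S`. -/
noncomputable def botInterval (G : SimpleGraph V) (l : ℕ) (X : ℕ → Set V) (S : Set V) : Set ℕ :=
  Set.Icc (botStart G l X S) (botEnd G l X S)

/-- A pre-branch of `S`. -/
def IsPreBranch (G : SimpleGraph V) (l : ℕ) (X : ℕ → Set V) (S C : Set V) : Prop :=
  IsBranch G S C ∧ ¬ IsInBranch G l X S C ∧ firstIdx l X C < botStart G l X S

/-- A post-branch of `S`. -/
def IsPostBranch (G : SimpleGraph V) (l : ℕ) (X : ℕ → Set V) (S C : Set V) : Prop :=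
  IsBranch G S C ∧ ¬ IsInBranch G l X S C ∧
    botStart G l X S ≤ firstIdx l X C ∧ botEnd G l X S < lastIdx l X C

/-- `C` waits in the interval `[i, j]` of the decomposition. -/
def WaitsIn (X : ℕ → Set V) (C : Set V) (i j : ℕ) : Prop :=
  ∀ t, i ≤ t → t ≤ j → C ∩ X t = C ∩ X i

/-- The decomposition is `S`-structured: every component of `G - S` that is not an
`S`-branch, and every pre- or post-branch of `S`, waits in `I(S,P)`. -/
def IsStructured (G : SimpleGraph V) (l : ℕ) (X : ℕ → Set V) (S : Set V) : Prop :=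
  ∀ C : Set V,
    ((IsCompOf G S C ∧ ¬ IsBranch G S C) ∨ IsPreBranch G l X S C ∨ IsPostBranch G l X S C) →
    WaitsIn X C (botStart G l X S) (botEnd G l X S)

/-- The decomposition is `I`-connected: every connected component of the subgraph
induced by any prefix of bags contains a vertex of `I`. -/
def IsIConn (G : SimpleGraph V) (l : ℕ) (X : ℕ → Set V) (I : Set V) : Prop :=
  ∀ i < l, ∀ C : Set V, IsCompIn G {v | ∃ j ≤ i, v ∈ X j} C → (C ∩ I).Nonempty

/-! ### Components of induced subgraphs -/

section Components

variable {G : SimpleGraph V} {S T U U' C D I : Set V}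

lemma subset_of_connected_of_adj_closed (hC : (G.induce C).Connected) {x : V} (hxC : x ∈ C)
    (hxD : x ∈ D) (hD : ∀ u ∈ D, ∀ v ∈ C, G.Adj u v → v ∈ D) : C ⊆ D := by
  have mem_of_walk : ∀ {a b : C}, (G.induce C).Walk a b → (a : V) ∈ D → (b : V) ∈ D := by
    intro a b w
    induction w with
    | nil => exact id
    | cons hab _ ih => exact fun ha => ih (hD _ ha _ (Subtype.property _) hab)
  intro y hy
  obtain ⟨w⟩ := hC.preconnected ⟨x, hxC⟩ ⟨y, hy⟩
  exact mem_of_walk w hxD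

lemma exists_isCompIn (G : SimpleGraph V) {s : V} (hs : s ∈ U) :
    ∃ C, IsCompIn G U C ∧ s ∈ C := by
  classical
  set C : Set V := {v | ∃ w : G.Walk s v, ∀ x ∈ w.support, x ∈ U}
  have hsC : s ∈ C := ⟨Walk.nil, by simpa only [Walk.support_nil, List.mem_singleton, forall_eq]⟩
  have hconn : (G.induce C).Connected := by
    refine induce_connected_of_patches s hsC ?_
    rintro v ⟨w, hw⟩
    have hwC : {x | x ∈ w.support} ⊆ C := fun x hx =>
      ⟨w.takeUntil x hx, fun y hy => hw y (w.support_takeUntil_subset_support hx hy)⟩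
    exact ⟨_, hwC, w.start_mem_support, w.end_mem_support,
      w.connected_induce_support.preconnected _ _⟩
  refine ⟨C, ⟨⟨s, hsC⟩, fun v ⟨w, hw⟩ => hw v w.end_mem_support, hconn, ?_⟩, hsC⟩
  rintro u ⟨w, hw⟩ v hv huv
  refine ⟨w.concat huv, fun x hx => ?_⟩
  rw [Walk.support_concat, List.mem_append, List.mem_singleton] at hx
  rcases hx with hx | rfl
  · exact hw x hx
  · exact hv

lemma IsCompIn.subset_of_mem (hC : IsCompIn G U C) (hD : IsCompIn G U' D) (hU : U ⊆ U') {x : V}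
    (hxC : x ∈ C) (hxD : x ∈ D) : C ⊆ D :=
  subset_of_connected_of_adj_closed hC.2.2.1 hxC hxD
    fun u hu v hv huv => hD.2.2.2 u hu v (hU (hC.2.1 hv)) huv

lemma IsCompIn.eq_of_mem (hC : IsCompIn G U C) (hD : IsCompIn G U D) {x : V} (hxC : x ∈ C)
    (hxD : x ∈ D) : C = D :=
  (hC.subset_of_mem hD subset_rfl hxC hxD).antisymm (hD.subset_of_mem hC subset_rfl hxD hxC)

lemma IsCompIn.of_adj_mem (hC : IsCompIn G U C) (hCU : C ⊆ U')
    (hadj : ∀ u ∈ C, ∀ v ∈ U', G.Adj u v → v ∈ U) : IsCompIn G U' C :=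
  ⟨hC.1, hCU, hC.2.2.1, fun u hu v hv huv => hC.2.2.2 u hu v (hadj u hu v hv huv) huv⟩

lemma IsCompIn.inter_nonempty_of_subset (hC : IsCompIn G U C) (hU : U' ⊆ U) {s : V} (hsC : s ∈ C)
    (hsU : s ∈ U') (hI : ∀ D, IsCompIn G U' D → (D ∩ I).Nonempty) : (C ∩ I).Nonempty := by
  obtain ⟨D, hD, hsD⟩ := exists_isCompIn G hsU
  exact (hI D hD).mono (Set.inter_subset_inter_left I (hD.subset_of_mem hC hU hsD hsC))

lemma ncard_isCompOf_inter_nonempty_le (hT : T.Finite) :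
    {C | IsCompOf G S C ∧ (C ∩ T).Nonempty}.ncard ≤ T.ncard := by
  have := hT.to_subtype
  choose pick hpick using fun C : {C | IsCompOf G S C ∧ (C ∩ T).Nonempty} => C.2.2
  refine Nat.card_le_card_of_injective (fun C => (⟨pick C, (hpick C).2⟩ : T)) fun C D hCD => ?_
  have hpick_eq : pick C = pick D := congrArg Subtype.val hCD
  exact Subtype.ext (IsCompIn.eq_of_mem C.2.1 D.2.1 (hpick C).1 (hpick_eq ▸ (hpick D).1))

end Components

/-! ### In-branches -/

section InBranches

variable {G : SimpleGraph V} {l k t : ℕ} {X : ℕ → Set V} {S C : Set V} {s : V}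

lemma bddAbove_supp (l : ℕ) (X : ℕ → Set V) (C : Set V) : BddAbove (supp l X C) :=
  ⟨l, fun _ ht => ht.1.le⟩

lemma firstIdx_le (ht : t ∈ supp l X C) : firstIdx l X C ≤ t :=
  Nat.sInf_le ht

lemma le_lastIdx (ht : t ∈ supp l X C) : t ≤ lastIdx l X C :=
  le_csSup (bddAbove_supp l X C) ht

lemma mem_supp_singleton : t ∈ supp l X {s} ↔ t < l ∧ s ∈ X t := by
  simp only [supp, Set.mem_ofPred_eq, Set.singleton_inter_nonempty]

namespace IsPathDecomp

lemma supp_nonempty (hP : IsPathDecomp G l X) (hC : C.Nonempty) : (supp l X C).Nonempty := by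
  obtain ⟨v, hv⟩ := hC
  obtain ⟨i, hi, hvi⟩ := hP.1 v
  exact ⟨i, hi, v, hv, hvi⟩

lemma firstIdx_mem_supp (hP : IsPathDecomp G l X) (hC : C.Nonempty) :
    firstIdx l X C ∈ supp l X C :=
  Nat.sInf_mem (hP.supp_nonempty hC)

lemma lastIdx_mem_supp (hP : IsPathDecomp G l X) (hC : C.Nonempty) :
    lastIdx l X C ∈ supp l X C :=
  Nat.sSup_mem (hP.supp_nonempty hC) (bddAbove_supp l X C)

lemma mem_of_firstIdx_le_of_le_lastIdx (hP : IsPathDecomp G l X)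
    (hfirst : firstIdx l X {s} ≤ t) (hlast : t ≤ lastIdx l X {s}) : s ∈ X t :=
  have hfirstMem := mem_supp_singleton.1 (hP.firstIdx_mem_supp (Set.singleton_nonempty s))
  have hlastMem := mem_supp_singleton.1 (hP.lastIdx_mem_supp (Set.singleton_nonempty s))
  hP.2.2 _ t _ hfirst hlast hlastMem.1 ⟨hfirstMem.2, hlastMem.2⟩

lemma ordConnected_supp (hP : IsPathDecomp G l X) (hC : (G.induce C).Connected) :
    (supp l X C).OrdConnected := by
  refine ⟨fun i ⟨_, x, hxC, hxi⟩ m ⟨hml, y, hyC, hym⟩ j ⟨hij, hjm⟩ => ?_⟩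
  by_contra hj
  have hCj : ∀ v ∈ C, v ∉ X j := fun v hv hvj => hj ⟨hjm.trans_lt hml, v, hv, hvj⟩
  have hbefore : C ⊆ {v | ∀ t < l, v ∈ X t → t < j} := by
    refine subset_of_connected_of_adj_closed hC hxC (fun t ht hxt => ?_)
      fun u hu v hv huv t ht hvt => ?_
    · exact not_le.1 fun hjt => hCj x hxC (hP.2.2 i j t hij hjt ht ⟨hxi, hxt⟩)
    · obtain ⟨r, hr, hur, hvr⟩ := hP.2.1 u v huv
      have hrj : r < j := hu r hr hur
      exact not_le.1 fun hjt => hCj v hv (hP.2.2 r j t hrj.le hjt ht ⟨hvr, hvt⟩)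
  exact (hbefore hyC m hml hym).not_ge hjm

lemma isInBranch_iff (hP : IsPathDecomp G l X) :
    IsInBranch G l X S C ↔ IsBranch G S C ∧ ∀ t ∈ supp l X C, S ⊆ X t := by
  constructor
  · rintro ⟨hb, hfirst, hlast⟩
    refine ⟨hb, fun t ht s hs => ?_⟩
    exact hP.2.2 _ t _ (firstIdx_le ht) (le_lastIdx ht) (hP.lastIdx_mem_supp hb.1.1).1
      ⟨hfirst hs, hlast hs⟩
  · rintro ⟨hb, hall⟩
    exact ⟨hb, hall _ (hP.firstIdx_mem_supp hb.1.1), hall _ (hP.lastIdx_mem_supp hb.1.1)⟩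

lemma supp_inter_supp_nonempty (hP : IsPathDecomp G l X) (hC : IsBranch G S C) (hs : s ∈ S) :
    (supp l X C ∩ supp l X {s}).Nonempty := by
  obtain ⟨-, u, hu, hus⟩ : s ∈ nbhdSet G C := hC.2 ▸ hs
  obtain ⟨t, ht, hut, hst⟩ := hP.2.1 u s hus
  exact ⟨t, ⟨ht, u, hu, hut⟩, mem_supp_singleton.2 ⟨ht, hst⟩⟩

/-- A branch avoiding the bag where the last vertex of `S` enters lies after it, and one avoiding
the bag where the first vertex of `S` leaves lies before it. -/
lemma isInBranch_of_notMem_supp (hP : IsPathDecomp G l X) (hC : IsBranch G S C) {a b : V}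
    (ha : a ∈ S) (hmax : ∀ s ∈ S, firstIdx l X {s} ≤ firstIdx l X {a})
    (hb : b ∈ S) (hmin : ∀ s ∈ S, lastIdx l X {b} ≤ lastIdx l X {s})
    (haC : firstIdx l X {a} ∉ supp l X C) (hbC : lastIdx l X {b} ∉ supp l X C) :
    IsInBranch G l X S C := by
  have hconn := hP.ordConnected_supp hC.1.2.2.1
  refine hP.isInBranch_iff.2 ⟨hC, fun t ht s hs => ?_⟩
  obtain ⟨i, hiC, hia⟩ := hP.supp_inter_supp_nonempty hC ha
  obtain ⟨j, hjC, hjb⟩ := hP.supp_inter_supp_nonempty hC hb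
  have hafter : firstIdx l X {a} ≤ t :=
    le_of_not_ge fun hle => haC (hconn.out ht hiC ⟨hle, firstIdx_le hia⟩)
  have hbefore : t ≤ lastIdx l X {b} :=
    le_of_not_ge fun hle => hbC (hconn.out hjC ht ⟨le_lastIdx hjb, hle⟩)
  exact hP.mem_of_firstIdx_le_of_le_lastIdx ((hmax s hs).trans hafter)
    (hbefore.trans (hmin s hs))

lemma exists_isInBranch [Finite V] (hP : IsPathDecomp G l X) (hw : ∀ i < l, (X i).ncard ≤ k)
    (hS : IsBottleneck G k S) : ∃ C, IsInBranch G l X S C := by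
  obtain ⟨hne, hcard⟩ := hS
  obtain ⟨a, ha, hmax⟩ :=
    Set.exists_max_image S (fun s => firstIdx l X {s}) S.toFinite hne
  obtain ⟨b, hb, hmin⟩ :=
    Set.exists_min_image S (fun s => lastIdx l X {s}) S.toFinite hne
  set p := firstIdx l X {a}
  set q := lastIdx l X {b}
  have hpl : p < l := (hP.firstIdx_mem_supp (Set.singleton_nonempty a)).1
  have hql : q < l := (hP.lastIdx_mem_supp (Set.singleton_nonempty b)).1
  by_contra! hnone
  have hmeet : {C | IsBranch G S C} ⊆ {C | IsCompOf G S C ∧ (C ∩ (X p ∪ X q)).Nonempty} := by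
    refine fun C hC => ⟨hC.1, ?_⟩
    by_contra hempty
    rw [Set.inter_union_distrib_left, Set.union_nonempty, not_or] at hempty
    exact hnone C (hP.isInBranch_of_notMem_supp hC ha hmax hb hmin
      (fun h => hempty.1 h.2) fun h => hempty.2 h.2)
  have hle : {C | IsBranch G S C}.ncard ≤ 2 * k :=
    calc {C | IsBranch G S C}.ncard
        ≤ {C | IsCompOf G S C ∧ (C ∩ (X p ∪ X q)).Nonempty}.ncard :=
          Set.ncard_le_ncard hmeet (Set.toFinite _)
      _ ≤ (X p ∪ X q).ncard := ncard_isCompOf_inter_nonempty_le (Set.toFinite _)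
      _ ≤ (X p).ncard + (X q).ncard := Set.ncard_union_le _ _
      _ ≤ 2 * k := by linarith [hw p hpl, hw q hql]
  omega

lemma bddAbove_lastIdx (hP : IsPathDecomp G l X) (S : Set V) :
    BddAbove {i | ∃ C, IsInBranch G l X S C ∧ i = lastIdx l X C} := by
  refine ⟨l, ?_⟩
  rintro _ ⟨C, hC, rfl⟩
  exact (hP.lastIdx_mem_supp hC.1.1.1).1.le

lemma supp_subset_botInterval (hP : IsPathDecomp G l X) (hC : IsInBranch G l X S C) :
    supp l X C ⊆ botInterval G l X S := by
  have hstart : botStart G l X S ≤ firstIdx l X C := Nat.sInf_le ⟨C, hC, rfl⟩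
  have hend : lastIdx l X C ≤ botEnd G l X S := le_csSup (hP.bddAbove_lastIdx S) ⟨C, hC, rfl⟩
  exact fun t ht => ⟨hstart.trans (firstIdx_le ht), (le_lastIdx ht).trans hend⟩

lemma exists_isInBranch_botStart_mem_supp (hP : IsPathDecomp G l X)
    (hne : ∃ C, IsInBranch G l X S C) :
    ∃ C, IsInBranch G l X S C ∧ botStart G l X S ∈ supp l X C := by
  obtain ⟨C₀, hC₀⟩ := hne
  obtain ⟨C, hC, hstart⟩ :
      botStart G l X S ∈ {i | ∃ C, IsInBranch G l X S C ∧ i = firstIdx l X C} :=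
    Nat.sInf_mem ⟨_, C₀, hC₀, rfl⟩
  exact ⟨C, hC, hstart ▸ hP.firstIdx_mem_supp hC.1.1.1⟩

lemma exists_isInBranch_botEnd_mem_supp (hP : IsPathDecomp G l X)
    (hne : ∃ C, IsInBranch G l X S C) :
    ∃ C, IsInBranch G l X S C ∧ botEnd G l X S ∈ supp l X C := by
  obtain ⟨C₀, hC₀⟩ := hne
  obtain ⟨C, hC, hend⟩ : botEnd G l X S ∈ {i | ∃ C, IsInBranch G l X S C ∧ i = lastIdx l X C} :=
    Nat.sSup_mem ⟨_, C₀, hC₀, rfl⟩ (hP.bddAbove_lastIdx S)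
  exact ⟨C, hC, hend ▸ hP.lastIdx_mem_supp hC.1.1.1⟩

end IsPathDecomp

lemma isStructured_of_isInBranch_or_waitsIn
    (h : ∀ C, IsCompOf G S C →
      IsInBranch G l X S C ∨ WaitsIn X C (botStart G l X S) (botEnd G l X S)) :
    IsStructured G l X S := by
  rintro C (⟨hC, hnb⟩ | ⟨hb, hni, -⟩ | ⟨hb, hni, -⟩)
  · exact (h C hC).resolve_left fun hin => hnb hin.1
  · exact (h C hb.1).resolve_left hni
  · exact (h C hb.1).resolve_left hni

lemma ncard_le_pdWidth_add_one {i : ℕ} (hi : i < l) : (X i).ncard ≤ pdWidth l X + 1 :=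
  (Finset.le_sup (f := fun i => (X i).ncard) (Finset.mem_range.2 hi)).trans le_tsub_add

lemma pdWidth_le_of_ncard_le {w : ℕ} (h : ∀ i < l, (X i).ncard ≤ w + 1) : pdWidth l X ≤ w :=
  Nat.sub_le_of_le_add (Finset.sup_le fun i hi => h i (Finset.mem_range.1 hi))

end InBranches

/-! ### Padded decompositions -/

/-- The vertex set of the subgraph spanned by the bags `X 0, …, X i`. -/
def prefixSet (X : ℕ → Set V) (i : ℕ) : Set V := {v | ∃ j ≤ i, v ∈ X j}

/-- An `I`-connected path decomposition with bags of size at most `w`, indexed by all of `ℕ` so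
that it can be reindexed freely: the bag `X 0` and the bags from index `l` on are empty. -/
structure IsPaddedDecomp (G : SimpleGraph V) (I : Set V) (w l : ℕ) (X : ℕ → Set V) : Prop where
  cover : ∀ v, ∃ i, v ∈ X i
  edge : ∀ u v, G.Adj u v → ∃ i, u ∈ X i ∧ v ∈ X i
  convex : ∀ {i j m v}, i ≤ j → j ≤ m → v ∈ X i → v ∈ X m → v ∈ X j
  iconn : ∀ i C, IsCompIn G (prefixSet X i) C → (C ∩ I).Nonempty
  width : ∀ i, (X i).ncard ≤ w
  zero : X 0 = ∅
  empty : ∀ i, l ≤ i → X i = ∅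

/-- The sequence `∅, X 0, …, X (l - 1), ∅, ∅, …`. -/
def pad (l : ℕ) (X : ℕ → Set V) : ℕ → Set V
  | 0 => ∅
  | t + 1 => {v | t < l ∧ v ∈ X t}

section Padded

variable {G : SimpleGraph V} {I S C : Set V} {w l i t : ℕ} {X : ℕ → Set V} {v : V}

lemma prefixSet_pad_succ (hl : 0 < l) :
    prefixSet (pad l X) (i + 1) = prefixSet X (min i (l - 1)) := by
  ext v
  constructor
  · rintro ⟨_ | j, hj, hv⟩
    · exact hv.elim
    · exact ⟨j, by have := hv.1; omega, hv.2⟩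
  · rintro ⟨j, hj, hv⟩
    exact ⟨j + 1, by omega, by omega, hv⟩

lemma IsPathDecomp.isPaddedDecomp_pad (hP : IsPathDecomp G l X) (hI : IsIConn G l X I)
    (hw : ∀ i < l, (X i).ncard ≤ w) : IsPaddedDecomp G I w (l + 1) (pad l X) where
  cover v := by
    obtain ⟨i, hi, hv⟩ := hP.1 v
    exact ⟨i + 1, hi, hv⟩
  edge u v huv := by
    obtain ⟨i, hi, hu, hv⟩ := hP.2.1 u v huv
    exact ⟨i + 1, ⟨hi, hu⟩, hi, hv⟩
  convex {i j m v} hij hjm hi hm := by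
    rcases i with _ | i
    · exact hi.elim
    obtain ⟨j, rfl⟩ : ∃ n, j = n + 1 := ⟨j - 1, by omega⟩
    obtain ⟨m, rfl⟩ : ∃ n, m = n + 1 := ⟨m - 1, by omega⟩
    exact ⟨by have := hm.1; omega, hP.2.2 i j m (by omega) (by omega) hm.1 ⟨hi.2, hm.2⟩⟩
  iconn i C hC := by
    obtain ⟨v, hv⟩ := hC.1
    obtain ⟨_ | j, hj, hvj⟩ := hC.2.1 hv
    · exact hvj.elim
    obtain ⟨i, rfl⟩ : ∃ n, i = n + 1 := ⟨i - 1, by omega⟩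
    have hl : 0 < l := hvj.1.pos
    rw [prefixSet_pad_succ hl] at hC
    exact hI (min i (l - 1)) (by omega) C hC
  width
    | 0 => by simp only [pad, Set.ncard_empty, Nat.zero_le]
    | t + 1 => by
      by_cases ht : t < l
      · simpa only [pad, ht, true_and, Set.ofPred_mem_eq] using hw t ht
      · simp only [pad, ht, false_and, Set.ofPred_false, Set.ncard_empty, Nat.zero_le]
  zero := rfl
  empty i hi := by
    obtain ⟨t, rfl⟩ : ∃ n, i = n + 1 := ⟨i - 1, by omega⟩
    exact Set.eq_empty_of_forall_notMem fun v hv => by have := hv.1; omega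

namespace IsPaddedDecomp

lemma lt_of_mem (h : IsPaddedDecomp G I w l X) (hv : v ∈ X i) : i < l :=
  not_le.1 fun hi => Set.notMem_empty v (h.empty i hi ▸ hv)

lemma pos_of_mem (h : IsPaddedDecomp G I w l X) (hv : v ∈ X i) : 0 < i :=
  Nat.pos_of_ne_zero fun hi => Set.notMem_empty v (h.zero ▸ hi ▸ hv)

lemma isPathDecomp (h : IsPaddedDecomp G I w l X) : IsPathDecomp G l X := by
  refine ⟨fun v => ?_, fun u v huv => ?_, fun i j m hij hjm _ v hv => h.convex hij hjm hv.1 hv.2⟩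
  · obtain ⟨i, hi⟩ := h.cover v
    exact ⟨i, h.lt_of_mem hi, hi⟩
  · obtain ⟨i, hu, hv⟩ := h.edge u v huv
    exact ⟨i, h.lt_of_mem hu, hu, hv⟩

lemma isIConn (h : IsPaddedDecomp G I w l X) : IsIConn G l X I :=
  fun i _ C hC => h.iconn i C hC

lemma isInBranch_iff (h : IsPaddedDecomp G I w l X) :
    IsInBranch G l X S C ↔ IsBranch G S C ∧ ∀ t, (C ∩ X t).Nonempty → S ⊆ X t := by
  rw [h.isPathDecomp.isInBranch_iff]
  exact and_congr_right fun _ =>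
    ⟨fun hall t ht => hall t ⟨h.lt_of_mem ht.some_mem.2, ht⟩, fun hall t ht => hall t ht.2⟩

end IsPaddedDecomp

end Padded

/-- The union of all in-branches of `S`. -/
def inBranchUnion (G : SimpleGraph V) (l : ℕ) (X : ℕ → Set V) (S : Set V) : Set V :=
  {v | ∃ C, IsInBranch G l X S C ∧ v ∈ C}

section InBranchUnion

variable {G : SimpleGraph V} {I S C : Set V} {w l t : ℕ} {X : ℕ → Set V}

lemma disjoint_inBranchUnion : Disjoint S (inBranchUnion G l X S) := by
  rw [Set.disjoint_right]
  rintro v ⟨C, hC, hvC⟩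
  exact hC.1.1.2.1 hvC

lemma nbhdSet_inBranchUnion_subset : nbhdSet G (inBranchUnion G l X S) ⊆ S := by
  rintro u ⟨hu, v, ⟨C, hC, hvC⟩, hvu⟩
  by_contra huS
  exact hu ⟨C, hC, hC.1.1.2.2.2 v hvC u huS hvu⟩

lemma IsPaddedDecomp.subset_of_inter_inBranchUnion_nonempty (h : IsPaddedDecomp G I w l X)
    (ht : (X t ∩ inBranchUnion G l X S).Nonempty) : S ⊆ X t := by
  obtain ⟨v, hvt, C, hC, hvC⟩ := ht
  exact (h.isInBranch_iff.1 hC).2 t ⟨v, hvC, hvt⟩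

lemma disjoint_inBranchUnion_of_not_isInBranch (hC : IsCompOf G S C)
    (hin : ¬ IsInBranch G l X S C) : Disjoint C (inBranchUnion G l X S) := by
  rw [Set.disjoint_left]
  rintro v hv ⟨D, hD, hvD⟩
  exact hin (IsCompIn.eq_of_mem hC hD.1.1 hv hvD ▸ hD)

end InBranchUnion

/-! ### Traversing two parts of a decomposition at different speeds -/

/-- The sequence which follows `X` along `σ` outside `W` and along `τ` inside `W`. -/
def interleave (X : ℕ → Set V) (W : Set V) (σ τ : ℕ → ℕ) (t : ℕ) : Set V :=
  X (σ t) \ W ∪ X (τ t) ∩ W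

/-- The reindexing of a sequence that runs up to `c`, stays there for `m` further steps, and runs
on. -/
def pause (c m t : ℕ) : ℕ := max (min t c) (t - m)

section Pause

variable {c m t : ℕ}

lemma monotone_pause : Monotone (pause c m) := fun s t hst => by
  unfold pause
  omega

lemma surjective_pause : Function.Surjective (pause c m) := fun j => by
  unfold pause
  rcases le_or_gt j c with hjc | hjc
  · exact ⟨j, by omega⟩
  · exact ⟨j + m, by omega⟩

lemma le_pause {l : ℕ} (ht : l + m ≤ t) : l ≤ pause c m t := by
  unfold pause
  omega

end Pause

section Interleave

variable {G : SimpleGraph V} {I W : Set V} {w l l' i t : ℕ} {X : ℕ → Set V} {σ τ : ℕ → ℕ} {v : V}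

lemma mem_interleave_of_notMem (hv : v ∉ W) : v ∈ interleave X W σ τ t ↔ v ∈ X (σ t) := by
  simp only [interleave, Set.mem_union, Set.mem_sdiff, Set.mem_inter_iff, hv, not_false_eq_true,
    and_true, and_false, or_false]

lemma mem_interleave_of_mem (hv : v ∈ W) : v ∈ interleave X W σ τ t ↔ v ∈ X (τ t) := by
  simp only [interleave, Set.mem_union, Set.mem_sdiff, Set.mem_inter_iff, hv, not_true_eq_false,
    and_true, and_false, false_or]

lemma interleave_eq_of_eq (h : σ t = τ t) : interleave X W σ τ t = X (σ t) := by
  rw [interleave, ← h, Set.union_comm, Set.inter_union_sdiff]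

lemma exists_le_eq_of_le (hσ : Monotone σ) (hσ' : Function.Surjective σ) {j : ℕ} (hj : j ≤ σ i) :
    ∃ t ≤ i, σ t = j := by
  obtain ⟨t, rfl⟩ := hσ' j
  rcases le_total t i with hti | hit
  · exact ⟨t, hti, rfl⟩
  · exact ⟨i, le_rfl, (hσ hit).antisymm hj⟩

lemma mem_prefixSet_interleave_of_notMem (hσ : Monotone σ) (hσ' : Function.Surjective σ)
    (hv : v ∉ W) : v ∈ prefixSet (interleave X W σ τ) i ↔ v ∈ prefixSet X (σ i) := by
  constructor
  · rintro ⟨t, ht, hvt⟩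
    exact ⟨σ t, hσ ht, (mem_interleave_of_notMem hv).1 hvt⟩
  · rintro ⟨j, hj, hvj⟩
    obtain ⟨t, ht, rfl⟩ := exists_le_eq_of_le hσ hσ' hj
    exact ⟨t, ht, (mem_interleave_of_notMem hv).2 hvj⟩

lemma mem_prefixSet_interleave_of_mem (hτ : Monotone τ) (hτ' : Function.Surjective τ)
    (hv : v ∈ W) : v ∈ prefixSet (interleave X W σ τ) i ↔ v ∈ prefixSet X (τ i) := by
  constructor
  · rintro ⟨t, ht, hvt⟩
    exact ⟨τ t, hτ ht, (mem_interleave_of_mem hv).1 hvt⟩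
  · rintro ⟨j, hj, hvj⟩
    obtain ⟨t, ht, rfl⟩ := exists_le_eq_of_le hτ hτ' hj
    exact ⟨t, ht, (mem_interleave_of_mem hv).2 hvj⟩

lemma prefixSet_interleave_of_eq (hσ : Monotone σ) (hσ' : Function.Surjective σ)
    (hτ : Monotone τ) (hτ' : Function.Surjective τ) (h : σ i = τ i) :
    prefixSet (interleave X W σ τ) i = prefixSet X (σ i) := by
  ext v
  by_cases hv : v ∈ W
  · rw [mem_prefixSet_interleave_of_mem hτ hτ' hv, h]
  · exact mem_prefixSet_interleave_of_notMem hσ hσ' hv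

lemma isPaddedDecomp_interleave (h : IsPaddedDecomp G I w l X) (hσ : Monotone σ)
    (hσ' : Function.Surjective σ) (hτ : Monotone τ) (hτ' : Function.Surjective τ)
    (hedge : ∀ u ∉ W, ∀ v ∈ W, G.Adj u v → ∃ t, u ∈ X (σ t) ∧ v ∈ X (τ t))
    (hiconn : ∀ i C, IsCompIn G (prefixSet (interleave X W σ τ) i) C → (C ∩ I).Nonempty)
    (hwidth : ∀ t, (interleave X W σ τ t).ncard ≤ w) (hσl : ∀ t, l' ≤ t → l ≤ σ t)
    (hτl : ∀ t, l' ≤ t → l ≤ τ t) : IsPaddedDecomp G I w l' (interleave X W σ τ) where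
  cover v := by
    obtain ⟨i, hi⟩ := h.cover v
    by_cases hv : v ∈ W
    · obtain ⟨t, rfl⟩ := hτ' i
      exact ⟨t, (mem_interleave_of_mem hv).2 hi⟩
    · obtain ⟨t, rfl⟩ := hσ' i
      exact ⟨t, (mem_interleave_of_notMem hv).2 hi⟩
  edge u v huv := by
    obtain ⟨i, hui, hvi⟩ := h.edge u v huv
    by_cases hu : u ∈ W <;> by_cases hv : v ∈ W
    · obtain ⟨t, rfl⟩ := hτ' i
      exact ⟨t, (mem_interleave_of_mem hu).2 hui, (mem_interleave_of_mem hv).2 hvi⟩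
    · obtain ⟨t, hvt, hut⟩ := hedge v hv u hu huv.symm
      exact ⟨t, (mem_interleave_of_mem hu).2 hut, (mem_interleave_of_notMem hv).2 hvt⟩
    · obtain ⟨t, hut, hvt⟩ := hedge u hu v hv huv
      exact ⟨t, (mem_interleave_of_notMem hu).2 hut, (mem_interleave_of_mem hv).2 hvt⟩
    · obtain ⟨t, rfl⟩ := hσ' i
      exact ⟨t, (mem_interleave_of_notMem hu).2 hui, (mem_interleave_of_notMem hv).2 hvi⟩
  convex {i j m v} hij hjm hi hm := by
    by_cases hv : v ∈ W
    · rw [mem_interleave_of_mem hv] at hi hm ⊢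
      exact h.convex (hτ hij) (hτ hjm) hi hm
    · rw [mem_interleave_of_notMem hv] at hi hm ⊢
      exact h.convex (hσ hij) (hσ hjm) hi hm
  iconn := hiconn
  width := hwidth
  zero := by
    obtain ⟨s, hs⟩ := hσ' 0
    obtain ⟨t, ht⟩ := hτ' 0
    have hσ0 : σ 0 = 0 := Nat.le_zero.1 ((hσ s.zero_le).trans_eq hs)
    have hτ0 : τ 0 = 0 := Nat.le_zero.1 ((hτ t.zero_le).trans_eq ht)
    rw [interleave_eq_of_eq (hσ0.trans hτ0.symm), hσ0, h.zero]
  empty t ht := by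
    rw [interleave, h.empty _ (hσl t ht), h.empty _ (hτl t ht), Set.empty_sdiff,
      Set.empty_inter, Set.union_empty]

end Interleave

/-! ### Introducing the vertices of a bag one at a time -/

/-- The sequence `X` with an additional bag between `X p` and `X (p + 1)`, which is `X (p + 1)`
without its vertices outside `X p` other than `v`. -/
def introduce (X : ℕ → Set V) (p : ℕ) (v : V) : ℕ → Set V :=
  interleave X ((X (p + 1) \ X p) \ {v}) (pause (p + 1) 1) (pause p 1)

section Introduce

variable {G : SimpleGraph V} {I S : Set V} {w l p t : ℕ} {X : ℕ → Set V} {v : V}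

lemma pause_succ_one_eq (ht : t ≠ p + 1) : pause (p + 1) 1 t = pause p 1 t := by
  unfold pause
  omega

lemma introduce_of_le (ht : t ≤ p) : introduce X p v t = X t := by
  rw [introduce, interleave_eq_of_eq (pause_succ_one_eq (by omega))]
  congr 1
  unfold pause
  omega

lemma introduce_of_lt (ht : p < t) : introduce X p v (t + 1) = X t := by
  rw [introduce, interleave_eq_of_eq (pause_succ_one_eq (by omega))]
  congr 1
  unfold pause
  omega

lemma introduce_succ (hv : v ∈ X (p + 1)) :
    introduce X p v (p + 1) = insert v (X (p + 1) ∩ X p) := by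
  have hσ : pause (p + 1) 1 (p + 1) = p + 1 := by
    unfold pause
    omega
  have hτ : pause p 1 (p + 1) = p := by
    unfold pause
    omega
  ext x
  simp only [introduce, interleave, hσ, hτ, Set.mem_union, Set.mem_sdiff, Set.mem_inter_iff,
    Set.mem_singleton_iff, Set.mem_insert_iff]
  grind

lemma prefixSet_introduce_succ (hv : v ∈ X (p + 1)) :
    prefixSet (introduce X p v) (p + 1) = insert v (prefixSet X p) := by
  ext x
  constructor
  · rintro ⟨j, hj, hx⟩
    rcases hj.lt_or_eq with hj | rfl
    · rw [introduce_of_le (Nat.lt_succ_iff.1 hj)] at hx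
      exact Or.inr ⟨j, Nat.lt_succ_iff.1 hj, hx⟩
    · rw [introduce_succ hv] at hx
      exact hx.imp_right fun hx => ⟨p, le_rfl, hx.2⟩
  · rintro (rfl | ⟨j, hj, hx⟩)
    · exact ⟨p + 1, le_rfl, introduce_succ hv ▸ Set.mem_insert x _⟩
    · exact ⟨j, by omega, by rwa [introduce_of_le hj]⟩

lemma inter_nonempty_of_isCompIn_insert {U Z : Set V}
    (hU : ∀ C, IsCompIn G U C → (C ∩ I).Nonempty) (hv : v ∈ I ∨ ∃ u ∈ U, G.Adj v u)
    (hZ : IsCompIn G (insert v U) Z) : (Z ∩ I).Nonempty := by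
  by_cases hvZ : v ∈ Z
  · rcases hv with hvI | ⟨u, hu, hvu⟩
    · exact ⟨v, hvZ, hvI⟩
    · have huZ : u ∈ Z := hZ.2.2.2 v hvZ u (Or.inr hu) hvu
      exact hZ.inter_nonempty_of_subset (Set.subset_insert v U) huZ hu hU
  · have hZU : Z ⊆ U := fun x hx =>
      (hZ.2.1 hx).resolve_left fun hxv => hvZ (hxv ▸ hx)
    exact hU Z (hZ.of_adj_mem hZU fun _ _ y hy _ => Or.inr hy)

lemma isPaddedDecomp_introduce [Finite V] (h : IsPaddedDecomp G I w l X) (hv : v ∈ X (p + 1))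
    (hvI : v ∈ I ∨ ∃ u ∈ prefixSet X p, G.Adj v u) :
    IsPaddedDecomp G I w (l + 1) (introduce X p v) := by
  refine isPaddedDecomp_interleave h monotone_pause surjective_pause monotone_pause
    surjective_pause ?_ ?_ ?_ (fun t => le_pause) fun t => le_pause
  · intro x _ y _ hxy
    obtain ⟨i, hxi, hyi⟩ := h.edge x y hxy
    obtain ⟨t, hσ, hτ⟩ : ∃ t, pause (p + 1) 1 t = i ∧ pause p 1 t = i := by
      unfold pause
      rcases le_or_gt i p with hip | hip
      · exact ⟨i, by omega, by omega⟩
      · exact ⟨i + 1, by omega, by omega⟩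
    exact ⟨t, hσ.symm ▸ hxi, hτ.symm ▸ hyi⟩
  · intro i Z hZ
    by_cases hi : i = p + 1
    · subst hi
      exact inter_nonempty_of_isCompIn_insert (h.iconn p) hvI (prefixSet_introduce_succ hv ▸ hZ)
    · rw [prefixSet_interleave_of_eq monotone_pause surjective_pause monotone_pause
        surjective_pause (pause_succ_one_eq hi)] at hZ
      exact h.iconn _ Z hZ
  · intro t
    by_cases ht : t = p + 1
    · subst ht
      have hsub : introduce X p v (p + 1) ⊆ X (p + 1) := by
        rw [introduce_succ hv]
        exact Set.insert_subset hv Set.inter_subset_left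
      exact (Set.ncard_le_ncard hsub (Set.toFinite _)).trans (h.width _)
    · rw [interleave_eq_of_eq (pause_succ_one_eq ht)]
      exact h.width _

lemma IsPaddedDecomp.exists_mem_or_adj (h : IsPaddedDecomp G I w l X)
    (hne : (X (p + 1) \ X p).Nonempty) :
    ∃ v ∈ X (p + 1) \ X p, v ∈ I ∨ ∃ u ∈ prefixSet X p, G.Adj v u := by
  by_contra! hnone
  obtain ⟨v, hv⟩ := hne
  obtain ⟨D, hD, hvD⟩ := exists_isCompIn G (U := prefixSet X (p + 1)) ⟨p + 1, le_rfl, hv.1⟩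
  have hDnew : D ⊆ X (p + 1) \ X p := by
    refine subset_of_connected_of_adj_closed hD.2.2.1 hvD hv fun x hx y hy hxy => ?_
    have hyp : y ∉ prefixSet X p := fun hy' => (hnone x hx).2 y hy' hxy
    obtain ⟨j, hj, hyj⟩ := hD.2.1 hy
    obtain rfl : j = p + 1 := hj.eq_of_not_lt fun hlt => hyp ⟨j, by omega, hyj⟩
    exact ⟨hyj, fun hy' => hyp ⟨p, le_rfl, hy'⟩⟩
  obtain ⟨x, hxD, hxI⟩ := h.iconn _ D hD
  exact (hnone x (hDnew hxD)).1 hxI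

lemma ncard_sdiff_introduce_lt [Finite V] (hv : v ∈ X (p + 1) \ X p) :
    (X (p + 1) \ insert v (X (p + 1) ∩ X p)).ncard < (X (p + 1) \ X p).ncard := by
  refine Set.ncard_lt_ncard ⟨fun x hx => ⟨hx.1, fun hxp => hx.2 (Or.inr ⟨hx.1, hxp⟩)⟩, ?_⟩
    (Set.toFinite _)
  exact fun hsub => (hsub hv).2 (Set.mem_insert v _)

/-- Introducing new vertices of `X (p + 1)` one at a time ends with the bag that completes `S`. -/
lemma IsPaddedDecomp.exists_subset_insert [Finite V] (h : IsPaddedDecomp G I w l X)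
    (hS : S ⊆ X (p + 1)) (hSp : ¬ S ⊆ X p) :
    ∃ l' X' q, IsPaddedDecomp G I w l' X' ∧ S ⊆ X' (q + 1) ∧
      ∃ s ∈ S, s ∉ X' q ∧ X' (q + 1) ⊆ insert s (X' q) := by
  induction hn : (X (p + 1) \ X p).ncard using Nat.strong_induction_on generalizing l X p with
  | _ n ih =>
    obtain ⟨s, hs, hsp⟩ := Set.not_subset.1 hSp
    obtain ⟨v, hv, hvI⟩ := h.exists_mem_or_adj ⟨s, hS hs, hsp⟩
    have h' := isPaddedDecomp_introduce h hv.1 hvI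
    by_cases hSv : S ⊆ insert v (X (p + 1) ∩ X p)
    · obtain rfl : s = v := (hSv hs).resolve_right fun hs' => hsp hs'.2
      refine ⟨l + 1, introduce X p s, p, h', ?_, s, hs, ?_, ?_⟩
      · rwa [introduce_succ hv.1]
      · rwa [introduce_of_le le_rfl]
      · rw [introduce_succ hv.1, introduce_of_le le_rfl]
        exact Set.insert_subset_insert Set.inter_subset_right
    · refine ih _ ?_ h' (p := p + 1) ?_ ?_ rfl
      · rw [introduce_of_lt p.lt_succ_self, introduce_succ hv.1, ← hn]
        exact ncard_sdiff_introduce_lt hv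
      · rwa [introduce_of_lt p.lt_succ_self]
      · rwa [introduce_succ hv.1]

lemma IsPaddedDecomp.disjoint_prefixSet_inBranchUnion (h : IsPaddedDecomp G I w l X)
    (hS : S ⊆ X (p + 1)) {s : V} (hs : s ∈ S) (hsp : s ∉ X p)
    (hsub : X (p + 1) ⊆ insert s (X p)) :
    Disjoint (prefixSet X (p + 1)) (inBranchUnion G l X S) := by
  rw [Set.disjoint_left]
  rintro v ⟨j, hj, hvj⟩ hvW
  have hSj : ∀ {i}, v ∈ X i → S ⊆ X i := fun hvi =>
    h.subset_of_inter_inBranchUnion_nonempty ⟨v, hvi, hvW⟩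
  rcases hj.lt_or_eq with hj | rfl
  · exact hsp (h.convex (by omega) p.le_succ (hSj hvj hs) (hS hs))
  · rcases hsub hvj with rfl | hvp
    · exact disjoint_inBranchUnion.notMem_of_mem_left hs hvW
    · exact hsp (hSj hvp hs)

lemma IsPaddedDecomp.exists_disjoint_inBranchUnion [Finite V] (h : IsPaddedDecomp G I w l X)
    (hS : ∃ t, S ⊆ X t) :
    ∃ l' X' q, IsPaddedDecomp G I w l' X' ∧ S ⊆ X' q ∧
      Disjoint (prefixSet X' q) (inBranchUnion G l' X' S) := by
  classical
  rcases hfirst : Nat.find hS with _ | p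
  · have hS0 : S ⊆ X 0 := hfirst ▸ Nat.find_spec hS
    refine ⟨l, X, 0, h, hS0, Set.disjoint_left.2 ?_⟩
    rintro v ⟨j, hj, hv⟩
    exact absurd (h.pos_of_mem hv) (by omega)
  · have hSp : S ⊆ X (p + 1) := hfirst ▸ Nat.find_spec hS
    obtain ⟨l', X', q, h', hSq, s, hs, hsq, hsub⟩ :=
      h.exists_subset_insert hSp (Nat.find_min hS (by omega))
    exact ⟨l', X', q + 1, h', hSq, h'.disjoint_prefixSet_inBranchUnion hSq hs hsq hsub⟩

end Introduce

/-! ### Pausing outside a set of vertices -/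

/-- The sequence which follows `X` outside `W` up to `X c`, then traverses all of `X` inside `W`,
and finally follows the rest of `X` outside `W`. -/
def detour (X : ℕ → Set V) (W : Set V) (c l : ℕ) : ℕ → Set V :=
  interleave X W (pause c l) (pause 0 c)

section Detour

variable {G : SimpleGraph V} {I S W C : Set V} {w l c q i j t : ℕ} {X : ℕ → Set V} {v : V}

lemma mem_detour_of_mem (hv : v ∈ W) : v ∈ detour X W c l t ↔ v ∈ X (pause 0 c t) :=
  mem_interleave_of_mem hv

lemma mem_detour_of_notMem (hv : v ∉ W) : v ∈ detour X W c l t ↔ v ∈ X (pause c l t) :=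
  mem_interleave_of_notMem hv

lemma IsPaddedDecomp.pause_eq_of_mem (h : IsPaddedDecomp G I w l X) (hv : v ∈ X (pause 0 c t)) :
    pause c l t = c := by
  have hpos := h.pos_of_mem hv
  have hlt := h.lt_of_mem hv
  unfold pause at *
  omega

lemma IsPaddedDecomp.le_pause_of_mem_prefixSet (h : IsPaddedDecomp G I w l X)
    (hv : v ∈ prefixSet X (pause 0 c i)) : c ≤ pause c l i := by
  obtain ⟨j, hj, hvj⟩ := hv
  have hpos := h.pos_of_mem hvj
  unfold pause at *
  omega

lemma IsPaddedDecomp.ncard_detour_le [Finite V] (h : IsPaddedDecomp G I w l X)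
    (hWX : ∀ t, (X t ∩ W).Nonempty → S ⊆ X t)
    (hmin : ∀ t, S ⊆ X t → (X c \ W).ncard ≤ (X t \ W).ncard) (t : ℕ) :
    (detour X W c l t).ncard ≤ w := by
  unfold detour interleave
  rcases (X (pause 0 c t) ∩ W).eq_empty_or_nonempty with hempty | hne
  · rw [hempty, Set.union_empty]
    exact (Set.ncard_le_ncard Set.sdiff_subset (Set.toFinite _)).trans (h.width _)
  · rw [h.pause_eq_of_mem hne.some_mem.1]
    calc (X c \ W ∪ X (pause 0 c t) ∩ W).ncard
        ≤ (X c \ W).ncard + (X (pause 0 c t) ∩ W).ncard := Set.ncard_union_le _ _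
      _ ≤ (X (pause 0 c t) \ W).ncard + (X (pause 0 c t) ∩ W).ncard :=
          Nat.add_le_add_right (hmin _ (hWX _ hne)) _
      _ = (X (pause 0 c t)).ncard := by
          rw [add_comm, Set.ncard_inter_add_ncard_sdiff_eq_ncard _ _ (Set.toFinite _)]
      _ ≤ w := h.width _

lemma mem_of_adj_of_nbhdSet_subset {u : V} (hN : nbhdSet G W ⊆ S) (hu : u ∈ W) (hv : v ∉ S)
    (huv : G.Adj u v) : v ∈ W := by
  by_contra hvW
  exact hv (hN ⟨hvW, u, hu, huv⟩)

/-- A component meeting `S` contains a component of a prefix graph of `X` that is not yet affected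
by the detour; any other component is itself a component of a prefix graph of `X`. -/
lemma IsPaddedDecomp.iconn_detour (h : IsPaddedDecomp G I w l X) (hSW : Disjoint S W)
    (hN : nbhdSet G W ⊆ S) (hSc : S ⊆ X c) (hSq : S ⊆ X q) (hqW : Disjoint (prefixSet X q) W)
    (hC : IsCompIn G (prefixSet (detour X W c l) i) C) : (C ∩ I).Nonempty := by
  have hout : ∀ {v}, v ∉ W → (v ∈ prefixSet (detour X W c l) i ↔ v ∈ prefixSet X (pause c l i)) :=
    mem_prefixSet_interleave_of_notMem monotone_pause surjective_pause
  have hin : ∀ {v}, v ∈ W → (v ∈ prefixSet (detour X W c l) i ↔ v ∈ prefixSet X (pause 0 c i)) :=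
    mem_prefixSet_interleave_of_mem monotone_pause surjective_pause
  by_cases hCS : ∃ s ∈ C, s ∈ S
  · obtain ⟨s, hsC, hsS⟩ := hCS
    refine hC.inter_nonempty_of_subset (U' := prefixSet X (min (pause c l i) q)) ?_ hsC ?_
      (h.iconn _)
    · rintro v ⟨j, hj, hvj⟩
      have hvW : v ∉ W := hqW.notMem_of_mem_left ⟨j, by omega, hvj⟩
      exact (hout hvW).2 ⟨j, by omega, hvj⟩
    · obtain ⟨j, hj, hsj⟩ := (hout (hSW.notMem_of_mem_left hsS)).1 (hC.2.1 hsC)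
      rcases le_total j q with hjq | hqj
      · exact ⟨j, by omega, hsj⟩
      · exact ⟨q, by omega, hSq hsS⟩
  push Not at hCS
  by_cases hCW : ∃ z ∈ C, z ∈ W
  · obtain ⟨z, hzC, hzW⟩ := hCW
    have hCW : C ⊆ W := subset_of_connected_of_adj_closed hC.2.2.1 hzC hzW
      fun u hu v hv huv => mem_of_adj_of_nbhdSet_subset hN hu (hCS v hv) huv
    have hCX : C ⊆ prefixSet X (pause 0 c i) := fun x hx => (hin (hCW hx)).1 (hC.2.1 hx)
    refine h.iconn _ C (hC.of_adj_mem hCX fun u hu v hv huv => ?_)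
    by_cases hvS : v ∈ S
    · exact (hout (hSW.notMem_of_mem_left hvS)).2
        ⟨c, h.le_pause_of_mem_prefixSet hv, hSc hvS⟩
    · exact (hin (mem_of_adj_of_nbhdSet_subset hN (hCW hu) hvS huv)).2 hv
  · push Not at hCW
    have hCX : C ⊆ prefixSet X (pause c l i) := fun x hx => (hout (hCW x hx)).1 (hC.2.1 hx)
    refine h.iconn _ C (hC.of_adj_mem hCX fun u hu v hv huv => (hout fun hvW => ?_).2 hv)
    exact hCW u hu (mem_of_adj_of_nbhdSet_subset hN hvW (hCS u hu) huv.symm)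

lemma isPaddedDecomp_detour [Finite V] (h : IsPaddedDecomp G I w l X) (hSW : Disjoint S W)
    (hN : nbhdSet G W ⊆ S) (hWX : ∀ t, (X t ∩ W).Nonempty → S ⊆ X t) (hSq : S ⊆ X q)
    (hqW : Disjoint (prefixSet X q) W) (hSc : S ⊆ X c)
    (hmin : ∀ t, S ⊆ X t → (X c \ W).ncard ≤ (X t \ W).ncard) :
    IsPaddedDecomp G I w (l + max l c) (detour X W c l) := by
  refine isPaddedDecomp_interleave h monotone_pause surjective_pause monotone_pause
    surjective_pause ?_ (fun i C => h.iconn_detour hSW hN hSc hSq hqW)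
    (h.ncard_detour_le hWX hmin) (fun t ht => le_pause (by omega))
    fun t ht => le_pause (by omega)
  intro u hu v hv huv
  have huS : u ∈ S := hN ⟨hu, v, hv, huv.symm⟩
  obtain ⟨j, hj⟩ := h.cover v
  obtain ⟨t, rfl⟩ := surjective_pause (c := 0) (m := c) j
  exact ⟨t, (h.pause_eq_of_mem hj).symm ▸ hSc huS, hj⟩

lemma waitsIn_detour (h : IsPaddedDecomp G I w l X) (hC : Disjoint C W)
    (hi : (detour X W c l i ∩ W).Nonempty) (hj : (detour X W c l j ∩ W).Nonempty) :
    WaitsIn (detour X W c l) C i j := by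
  have hpause : ∀ {t}, (detour X W c l t ∩ W).Nonempty → pause c l t = c := fun ⟨_, hvt, hvW⟩ =>
    h.pause_eq_of_mem ((mem_detour_of_mem hvW).1 hvt)
  intro t hit htj
  have ht : pause c l t = pause c l i :=
    ((monotone_pause htj).trans_eq ((hpause hj).trans (hpause hi).symm)).antisymm
      (monotone_pause hit)
  ext v
  refine and_congr_right fun hvC => ?_
  have hvW : v ∉ W := hC.notMem_of_mem_left hvC
  rw [mem_detour_of_notMem hvW, mem_detour_of_notMem hvW, ht]

lemma isInBranch_detour_iff {l' : ℕ} (h : IsPaddedDecomp G I w l X)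
    (h' : IsPaddedDecomp G I w l' (detour X (inBranchUnion G l X S) c l)) (hSc : S ⊆ X c) :
    IsInBranch G l' (detour X (inBranchUnion G l X S) c l) S C ↔ IsInBranch G l X S C := by
  have hout : ∀ s ∈ S, s ∉ inBranchUnion G l X S := fun s hs =>
    disjoint_inBranchUnion.notMem_of_mem_left hs
  constructor
  · intro hC
    by_contra hnot
    have hCW := disjoint_inBranchUnion_of_not_isInBranch hC.1.1 hnot
    refine hnot (h.isInBranch_iff.2 ⟨hC.1, fun j ⟨v, hvC, hvj⟩ s hs => ?_⟩)
    obtain ⟨t, rfl⟩ := surjective_pause (c := c) (m := l) j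
    have hvt := (mem_detour_of_notMem (hCW.notMem_of_mem_left hvC)).2 hvj
    exact (mem_detour_of_notMem (hout s hs)).1
      ((h'.isInBranch_iff.1 hC).2 t ⟨v, hvC, hvt⟩ hs)
  · intro hC
    refine h'.isInBranch_iff.2 ⟨hC.1, fun t ⟨v, hvC, hvt⟩ s hs => ?_⟩
    have hvW : v ∈ inBranchUnion G l X S := ⟨C, hC, hvC⟩
    rw [mem_detour_of_mem hvW] at hvt
    rw [mem_detour_of_notMem (hout s hs), h.pause_eq_of_mem hvt]
    exact hSc hs

lemma inBranchUnion_detour {l' : ℕ} (h : IsPaddedDecomp G I w l X)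
    (h' : IsPaddedDecomp G I w l' (detour X (inBranchUnion G l X S) c l)) (hSc : S ⊆ X c) :
    inBranchUnion G l' (detour X (inBranchUnion G l X S) c l) S = inBranchUnion G l X S :=
  Set.ext fun _ => exists_congr fun _ => and_congr_left' (isInBranch_detour_iff h h' hSc)

lemma IsPaddedDecomp.exists_isInBranch_or_waitsIn [Finite V] (h : IsPaddedDecomp G I w l X)
    (hS : ∃ t, S ⊆ X t) :
    ∃ l' X', IsPaddedDecomp G I w l' X' ∧ ∀ C, IsCompOf G S C → IsInBranch G l' X' S C ∨
      ∀ i j, (X' i ∩ inBranchUnion G l' X' S).Nonempty →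
        (X' j ∩ inBranchUnion G l' X' S).Nonempty → WaitsIn X' C i j := by
  obtain ⟨l, X, q, h, hSq, hqW⟩ := h.exists_disjoint_inBranchUnion hS
  set W := inBranchUnion G l X S
  obtain ⟨c, hSc, hmin⟩ : ∃ c, S ⊆ X c ∧ ∀ t, S ⊆ X t → (X c \ W).ncard ≤ (X t \ W).ncard := by
    obtain ⟨c, hc⟩ := exists_minimalFor_of_wellFoundedLT (fun t => S ⊆ X t)
      (fun t => (X t \ W).ncard) ⟨q, hSq⟩
    exact ⟨c, hc.1, fun t ht => (le_total _ _).elim id (hc.2 ht)⟩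
  have h' := isPaddedDecomp_detour h disjoint_inBranchUnion nbhdSet_inBranchUnion_subset
    (fun t => h.subset_of_inter_inBranchUnion_nonempty) hSq hqW hSc hmin
  refine ⟨l + max l c, detour X W c l, h', fun C hC => or_iff_not_imp_left.2 fun hin i j => ?_⟩
  rw [inBranchUnion_detour h h' hSc]
  rw [isInBranch_detour_iff h h' hSc] at hin
  exact waitsIn_detour h (disjoint_inBranchUnion_of_not_isInBranch hC hin)

end Detour

/-! ### Structured decompositions -/

lemma IsPathDecomp.isStructured_and_subset_or_waitsIn {G : SimpleGraph V} {l : ℕ} {X : ℕ → Set V}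
    {S : Set V} (hP : IsPathDecomp G l X) (hne : ∃ C, IsInBranch G l X S C)
    (h : ∀ C, IsCompOf G S C → IsInBranch G l X S C ∨
      ∀ i j, (X i ∩ inBranchUnion G l X S).Nonempty →
        (X j ∩ inBranchUnion G l X S).Nonempty → WaitsIn X C i j) :
    IsStructured G l X S ∧ ∀ C, IsCompOf G S C →
      supp l X C ⊆ botInterval G l X S ∨ WaitsIn X C (botStart G l X S) (botEnd G l X S) := by
  obtain ⟨A, hA, -, v, hvA, hv⟩ := hP.exists_isInBranch_botStart_mem_supp hne
  obtain ⟨B, hB, -, u, huB, hu⟩ := hP.exists_isInBranch_botEnd_mem_supp hne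
  have hwaits : ∀ C, IsCompOf G S C →
      IsInBranch G l X S C ∨ WaitsIn X C (botStart G l X S) (botEnd G l X S) := fun C hC =>
    (h C hC).imp_right fun hC => hC _ _ ⟨v, hv, A, hA, hvA⟩ ⟨u, hu, B, hB, huB⟩
  exact ⟨isStructured_of_isInBranch_or_waitsIn hwaits,
    fun C hC => (hwaits C hC).imp_left hP.supp_subset_botInterval⟩

theorem stmt8_general [Finite V] {G : SimpleGraph V} {I S : Set V} {l : ℕ} {X : ℕ → Set V}
    (hP : IsPathDecomp G l X) (hI : IsIConn G l X I)
    (hS : ∀ l' X', IsPathDecomp G l' X' → pdWidth l' X' ≤ pdWidth l X →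
      ∃ C, IsInBranch G l' X' S C) :
    ∃ l' X', IsPathDecomp G l' X' ∧ IsIConn G l' X' I ∧ pdWidth l' X' ≤ pdWidth l X ∧
      IsStructured G l' X' S ∧
      ∀ C, IsCompOf G S C → supp l' X' C ⊆ botInterval G l' X' S ∨
        WaitsIn X' C (botStart G l' X' S) (botEnd G l' X' S) := by
  obtain ⟨C, hC⟩ := hS l X hP le_rfl
  have hfirst : firstIdx l X C < l := (hP.firstIdx_mem_supp hC.1.1.1).1
  have hpad := hP.isPaddedDecomp_pad hI fun i hi => ncard_le_pdWidth_add_one hi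
  obtain ⟨l', X', h', hwaits⟩ := hpad.exists_isInBranch_or_waitsIn
    ⟨firstIdx l X C + 1, fun s hs => ⟨hfirst, hC.2.1 hs⟩⟩
  have hwidth : pdWidth l' X' ≤ pdWidth l X := pdWidth_le_of_ncard_le fun i _ => h'.width i
  have hne := hS l' X' h'.isPathDecomp hwidth
  exact ⟨l', X', h'.isPathDecomp, h'.isIConn, hwidth,
    h'.isPathDecomp.isStructured_and_subset_or_waitsIn hne hwaits⟩

/-- given an `I`-connected path decomposition of width at most `k-1`
and a bottleneck `S`, there is an `I`-connected path decomposition of no larger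
width which is `S`-structured, and in which every component of `G - S` is either
contained in the interval of `S` or waits in it. -/
theorem stmt8 [Fintype V] (k : ℕ) (hk : 1 ≤ k) (G : SimpleGraph V) (I : Set V)
    (l : ℕ) (X : ℕ → Set V) (hP : IsPathDecomp G l X) (hIc : IsIConn G l X I)
    (hw : pdWidth l X ≤ k - 1) (S : Set V) (hS : IsBottleneck G k S) :
    ∃ (l' : ℕ) (X' : ℕ → Set V),
      IsPathDecomp G l' X' ∧ IsIConn G l' X' I ∧
      pdWidth l' X' ≤ pdWidth l X ∧
      IsStructured G l' X' S ∧
      ∀ C : Set V, IsCompOf G S C →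
        (supp l' X' C ⊆ botInterval G l' X' S ∨
          WaitsIn X' C (botStart G l' X' S) (botEnd G l' X' S)) := by
  refine stmt8_general hP hIc fun l' X' hP' hw' => hP'.exists_isInBranch (fun i hi => ?_) hS
  have := ncard_le_pdWidth_add_one (X := X') hi
  omega
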